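/- (Theorem 1, case of large ciphering probability.) Fix γ > 0, d_M > 0, d_K > 0 and set C = log₂(1+γ), V = 1 − (1+γ)^{−2}, ε(n, d) = Q((ln 2)·√(n/V)·(C − d/n)). Fix D_loss > 0, D_conf > 0 and α > 0, and define D(n_M, n_K) = ε(n_M, d_M)·D_loss + α·(1 − ε(n_M, d_M))·ε(n_K, d_K)·D_conf. Let 0 < a_M ≤ b_M and 0 < a_K ≤ b_K be blocklength bounds. If α·ε(a_K, d_K)·D_conf ≥ D_loss, then for all n_M ∈ [a_M, b_M] and n_K ∈ [a_K, b_K] one has D(n_M, n_K) ≤ D(b_M, a_K); that is, the maximum of D over the box is attained at (n_M^max, n_K^min). -/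

import Mathlib

/-- The Gaussian Q-function `Q(x) = (1/√(2π)) ∫_x^∞ e^{−t²/2} dt`. -/
noncomputable def gaussQ (x : ℝ) : ℝ :=
  (Real.sqrt (2 * Real.pi))⁻¹ * ∫ t in Set.Ioi x, Real.exp (-t ^ 2 / 2)

/-- Finite-blocklength error probability for SNR `γ`, payload `d`, blocklength `n`,
with capacity `C = log₂(1+γ)` and dispersion `V = 1 − (1+γ)^{−2}`. -/
noncomputable def epsFBL (γ d n : ℝ) : ℝ :=
  gaussQ (Real.log 2 * Real.sqrt (n / (1 - ((1 + γ) ^ 2)⁻¹)) *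
    (Real.logb 2 (1 + γ) - d / n))

/-- The eavesdropper's expected semantic distortion
`D(n_M, n_K) = ε(n_M,d_M)·D_loss + α·(1 − ε(n_M,d_M))·ε(n_K,d_K)·D_conf`. -/
noncomputable def deceptionDistortion (γ dM dK Dloss Dconf α nM nK : ℝ) : ℝ :=
  epsFBL γ dM nM * Dloss + α * (1 - epsFBL γ dM nM) * epsFBL γ dK nK * Dconf

theorem integrable_exp_neg_sq_div_two :
    MeasureTheory.Integrable fun t : ℝ => Real.exp (-t ^ 2 / 2) := by
  convert integrable_exp_neg_mul_sq (b := 1 / 2) (by norm_num) using 3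
  ring

theorem integral_exp_neg_sq_div_two :
    ∫ t : ℝ, Real.exp (-t ^ 2 / 2) = Real.sqrt (2 * Real.pi) := by
  have h := integral_gaussian (1 / 2)
  convert h using 3
  · ring_nf
  · ring

theorem gaussQ_antitone : Antitone gaussQ := by
  intro x y hxy
  refine mul_le_mul_of_nonneg_left ?_ (by positivity)
  exact MeasureTheory.setIntegral_mono_set integrable_exp_neg_sq_div_two.integrableOn
    (Filter.Eventually.of_forall fun t => (Real.exp_pos _).le)
    (Set.Ioi_subset_Ioi hxy).eventuallyLE

theorem gaussQ_le_one (x : ℝ) : gaussQ x ≤ 1 := by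
  have hpos : 0 < Real.sqrt (2 * Real.pi) := by positivity
  rw [gaussQ, inv_mul_le_iff₀ hpos, mul_one, ← integral_exp_neg_sq_div_two]
  exact MeasureTheory.setIntegral_le_integral integrable_exp_neg_sq_div_two
    (Filter.Eventually.of_forall fun t => (Real.exp_pos _).le)

theorem epsFBL_le_one (γ d n : ℝ) : epsFBL γ d n ≤ 1 :=
  gaussQ_le_one _

/-- A larger blocklength does not increase the decoding error probability. -/
theorem epsFBL_antitoneOn {γ d : ℝ} (hγ : 0 < γ) (hd : 0 ≤ d) :
    AntitoneOn (epsFBL γ d) (Set.Ioi 0) := by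
  intro m hm n hn hmn
  rw [Set.mem_Ioi] at hm hn
  have hC : 0 < Real.logb 2 (1 + γ) := Real.logb_pos one_lt_two (by linarith)
  have hV : 0 < 1 - ((1 + γ) ^ 2)⁻¹ :=
    sub_pos.2 (inv_lt_one_of_one_lt₀ (by nlinarith))
  have hlog : 0 < Real.log 2 := Real.log_pos one_lt_two
  refine gaussQ_antitone ?_
  rw [mul_assoc, mul_assoc]
  refine mul_le_mul_of_nonneg_left ?_ hlog.le
  have factor : ∀ k : ℝ, 0 < k → ∀ v c : ℝ, Real.sqrt (k / v) * (c - d / k) =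
      (c * Real.sqrt k - d / Real.sqrt k) / Real.sqrt v := by
    intro k hk v c
    have hs : 0 < Real.sqrt k := Real.sqrt_pos.2 hk
    rw [Real.sqrt_div hk.le, div_mul_eq_mul_div]
    congr 1
    nth_rewrite 2 [← Real.mul_self_sqrt hk.le]
    field_simp
  rw [factor m hm, factor n hn]
  have hs : 0 < Real.sqrt m := Real.sqrt_pos.2 hm
  have hle : Real.sqrt m ≤ Real.sqrt n := Real.sqrt_le_sqrt hmn
  gcongr

/-- Theorem 1, case of large ciphering probability: if
`α·ε(a_K,d_K)·D_conf ≥ D_loss`, the maximum of the distortion `D` over the box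
`[a_M, b_M] × [a_K, b_K]` is attained at `(n_M^max, n_K^min) = (b_M, a_K)`. -/
theorem distortion_max_large_alpha
    (γ dM dK Dloss Dconf α aM bM aK bK : ℝ)
    (hγ : 0 < γ) (hdM : 0 < dM) (hdK : 0 < dK)
    (hDloss : 0 < Dloss) (hDconf : 0 < Dconf) (hα : 0 < α)
    (haM : 0 < aM) (hMb : aM ≤ bM) (haK : 0 < aK) (hKb : aK ≤ bK)
    (hcase : Dloss ≤ α * epsFBL γ dK aK * Dconf) :
    ∀ nM ∈ Set.Icc aM bM, ∀ nK ∈ Set.Icc aK bK,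
      deceptionDistortion γ dM dK Dloss Dconf α nM nK ≤
        deceptionDistortion γ dM dK Dloss Dconf α bM aK := by
  rintro nM ⟨hnM, hnMb⟩ nK ⟨hnK, -⟩
  have hM : epsFBL γ dM bM ≤ epsFBL γ dM nM :=
    epsFBL_antitoneOn hγ hdM.le (haM.trans_le hnM) (haM.trans_le hMb) hnMb
  have hK : epsFBL γ dK nK ≤ epsFBL γ dK aK :=
    epsFBL_antitoneOn hγ hdK.le haK (haK.trans_le hnK) hnK
  have h1 : 0 ≤ 1 - epsFBL γ dM nM := sub_nonneg.2 (epsFBL_le_one _ _ _)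
  calc deceptionDistortion γ dM dK Dloss Dconf α nM nK
      ≤ deceptionDistortion γ dM dK Dloss Dconf α nM aK := by
        unfold deceptionDistortion
        gcongr
    _ ≤ deceptionDistortion γ dM dK Dloss Dconf α bM aK := by
        unfold deceptionDistortion
        nlinarith [mul_nonneg (sub_nonneg.2 hM) (sub_nonneg.2 hcase)]
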